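/- arXiv:1411.7983 — 2 statements merged into one kernel-verified Lean document; each statement's English description precedes it below -/
import Mathlib

section
/- For every real α with 0 < α ≤ 2, the fractional centered-difference weights sum to zero: Σ_{k ∈ ℤ} w_k^α = 0, the series converging absolutely, where w_k^α = (−1)^k Γ(α+1) / (Γ(α/2 − k + 1) Γ(α/2 + k + 1)). -/
open Real

/-- The fractional centered-difference weights
`w_k^α = (−1)^k Γ(α+1) / (Γ(α/2 − k + 1) Γ(α/2 + k + 1))`. -/
noncomputable def fracWeight (α : ℝ) (k : ℤ) : ℝ :=
  (-1 : ℝ) ^ k * Real.Gamma (α + 1) /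
    (Real.Gamma (α / 2 - k + 1) * Real.Gamma (α / 2 + k + 1))

/-!
The functional equation of `Γ` gives `(k + 1 + α/2) w_{k+1} = (k - α/2) w_k`, so with
`v_k = (k - α/2) w_k` the weights telescope: `α w_{k+1} = v_k - v_{k+1}`. Once `k + 1 ≥ α/2` the
factor `1 - α / (k + 1 + α/2)` taking `v_k` to `v_{k+1}` is nonnegative, so `α |w_{k+1}|` telescopes
as well, to `|v_k| - |v_{k+1}|`, which gives absolute convergence. The product of these factors
diverges to zero with the harmonic series, so `v_k → 0` and `∑_{k ≥ 1} w_k = v_0 / α = -w_0 / 2`;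
the evenness of `w` doubles this sum.
-/

open Filter Topology

theorem summable_of_eventually_le_sub_succ {f u : ℕ → ℝ} (hf : ∀ n, 0 ≤ f n) (hu : ∀ n, 0 ≤ u n)
    (h : ∀ᶠ n in atTop, f n ≤ u n - u (n + 1)) : Summable f := by
  obtain ⟨N, hN⟩ := eventually_atTop.1 h
  rw [← summable_nat_add_iff N]
  refine summable_of_sum_range_le (c := u N) (fun n ↦ hf _) fun n ↦ ?_
  calc ∑ i ∈ Finset.range n, f (i + N)
      ≤ ∑ i ∈ Finset.range n, (u (i + N) - u (i + 1 + N)) :=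
        Finset.sum_le_sum fun i _ ↦ by simpa only [add_right_comm] using hN (i + N) (by lia)
    _ = u N - u (n + N) := by rw [Finset.sum_range_sub' (fun i ↦ u (i + N)), zero_add]
    _ ≤ u N := sub_le_self _ (hu _)

theorem hasSum_sub_succ {G : Type*} [AddCommGroup G] [TopologicalSpace G] [ContinuousSub G]
    [T2Space G] {v : ℕ → G} {l : G} (hs : Summable fun n ↦ v n - v (n + 1))
    (hv : Tendsto v atTop (𝓝 l)) : HasSum (fun n ↦ v n - v (n + 1)) (v 0 - l) := by
  simpa only [hs.hasSum_iff_tendsto_nat, Finset.sum_range_sub'] using hv.const_sub (v 0)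

theorem tendsto_zero_of_eventually_succ_le_one_sub_mul {u p : ℕ → ℝ} (hu : ∀ n, 0 ≤ u n)
    (hp : Tendsto (fun n ↦ ∑ i ∈ Finset.range n, p i) atTop atTop)
    (h : ∀ᶠ n in atTop, u (n + 1) ≤ (1 - p n) * u n) : Tendsto u atTop (𝓝 0) := by
  obtain ⟨N, hN⟩ := eventually_atTop.1 h
  let P : ℕ → ℝ := fun n ↦ ∑ i ∈ Finset.range n, p i
  have bound : ∀ n ≥ N, u n ≤ u N * exp (P N) * exp (-P n) := fun n hn ↦ by
    induction n, hn using Nat.le_induction with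
    | base => rw [mul_assoc, ← exp_add, add_neg_cancel, exp_zero, mul_one]
    | succ n hn ih =>
      calc u (n + 1)
          ≤ (1 - p n) * u n := hN n hn
        _ ≤ exp (-p n) * u n := mul_le_mul_of_nonneg_right (one_sub_le_exp_neg _) (hu n)
        _ ≤ exp (-p n) * (u N * exp (P N) * exp (-P n)) := by gcongr
        _ = u N * exp (P N) * exp (-P (n + 1)) := by
          simp only [P, Finset.sum_range_succ, neg_add, exp_add]
          ring
  have exp_tendsto : Tendsto (fun n ↦ u N * exp (P N) * exp (-P n)) atTop (𝓝 0) := by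
    simpa only [mul_zero, Function.comp_def] using
      (tendsto_exp_neg_atTop_nhds_zero.comp hp).const_mul (u N * exp (P N))
  exact squeeze_zero' (.of_forall hu) (eventually_atTop.2 ⟨N, bound⟩) exp_tendsto

theorem tendsto_sum_range_div_natCast_add_atTop {c b : ℝ} (hc : 0 < c) (hb : 0 ≤ b) :
    Tendsto (fun n ↦ ∑ i ∈ Finset.range n, c / (i + b)) atTop atTop := by
  rw [← not_summable_iff_tendsto_nat_atTop_of_nonneg fun n ↦ by positivity]
  intro hs
  have shifted_harmonic : Summable fun n : ℕ ↦ 1 / |n + b| ^ (1 : ℝ) := by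
    refine (hs.mul_left c⁻¹).congr fun n ↦ ?_
    rw [rpow_one, abs_of_nonneg (by positivity)]
    field_simp
  exact lt_irrefl _ ((summable_one_div_nat_add_rpow b 1).1 shifted_harmonic)

theorem inv_Gamma_eq_self_mul_inv_Gamma_add_one (s : ℝ) :
    (Gamma s)⁻¹ = s * (Gamma (s + 1))⁻¹ := by
  -- At the pole `s = 0` the convention `Gamma 0 = 0` agrees with the entire function `1 / Γ`.
  rcases eq_or_ne s 0 with rfl | hs
  · rw [Gamma_zero, inv_zero, zero_mul]
  · rw [Gamma_add_one hs, mul_inv, mul_inv_cancel_left₀ hs]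

theorem fracWeight_neg (α : ℝ) (k : ℤ) : fracWeight α (-k) = fracWeight α k := by
  have sign : (-1 : ℝ) ^ (-k) = (-1) ^ k := by rw [zpow_neg, ← inv_zpow, inv_neg_one]
  rw [fracWeight, fracWeight, sign, Int.cast_neg, sub_neg_eq_add, ← sub_eq_add_neg,
    mul_comm (Gamma (α / 2 + k + 1))]

theorem mul_fracWeight_add_one (α : ℝ) (k : ℤ) :
    (k + 1 + α / 2) * fracWeight α (k + 1) = (k - α / 2) * fracWeight α k := by
  have left := inv_Gamma_eq_self_mul_inv_Gamma_add_one (α / 2 - k)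
  have right := inv_Gamma_eq_self_mul_inv_Gamma_add_one (α / 2 + k + 1)
  have left_arg : α / 2 - (k + 1 : ℤ) + 1 = α / 2 - k := by push_cast; ring
  have right_arg : α / 2 + (k + 1 : ℤ) + 1 = α / 2 + k + 1 + 1 := by push_cast; ring
  simp only [fracWeight, div_eq_mul_inv _ (Gamma _ * Gamma _), mul_inv, left_arg, right_arg, left,
    right, zpow_add_one₀ (neg_ne_zero.2 (one_ne_zero' ℝ))]
  ring

theorem self_mul_fracWeight_add_one (α : ℝ) (k : ℤ) :
    α * fracWeight α (k + 1) =
      (k - α / 2) * fracWeight α k - (k + 1 - α / 2) * fracWeight α (k + 1) := by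
  linear_combination mul_fracWeight_add_one α k

theorem summable_abs_fracWeight_natCast_add_one {α : ℝ} (hα : 0 < α) :
    Summable fun n : ℕ ↦ |fracWeight α (n + 1)| := by
  let v : ℕ → ℝ := fun n ↦ (n - α / 2) * fracWeight α n
  have telescope : ∀ᶠ n : ℕ in atTop, α * |fracWeight α (n + 1)| ≤ |v n| - |v (n + 1)| := by
    filter_upwards [tendsto_natCast_atTop_atTop.eventually_ge_atTop (α / 2)] with n hn
    have hv : v n = (n + 1 + α / 2) * fracWeight α (n + 1) :=
      (mul_fracWeight_add_one α n).symm
    have hv' : v (n + 1) = (n + 1 - α / 2) * fracWeight α (n + 1) := by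
      simp only [v, Nat.cast_add, Nat.cast_one]
    rw [hv, hv', abs_mul, abs_mul, abs_of_nonneg (by positivity : 0 ≤ (n : ℝ) + 1 + α / 2),
      abs_of_nonneg (by linarith : 0 ≤ (n : ℝ) + 1 - α / 2)]
    linarith
  exact (summable_mul_left_iff hα.ne').1 <|
    summable_of_eventually_le_sub_succ (fun n ↦ by positivity) (fun n ↦ abs_nonneg (v n)) telescope

theorem tendsto_sub_mul_fracWeight_zero {α : ℝ} (hα : 0 < α) :
    Tendsto (fun n : ℕ ↦ (n - α / 2) * fracWeight α n) atTop (𝓝 0) := by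
  let v : ℕ → ℝ := fun n ↦ (n - α / 2) * fracWeight α n
  let p : ℕ → ℝ := fun n ↦ α / (n + (1 + α / 2))
  have one_sub_p (n : ℕ) : 1 - p n = (n + 1 - α / 2) / (n + 1 + α / 2) := by
    simp only [p]
    field_simp
    ring
  have v_succ (n : ℕ) : v (n + 1) = (1 - p n) * v n := by
    have denom_ne_zero : (n : ℝ) + 1 + α / 2 ≠ 0 := by positivity
    have recurrence : (n + 1 + α / 2) * fracWeight α (n + 1) = v n := mul_fracWeight_add_one α n
    rw [one_sub_p, ← recurrence, div_mul_eq_mul_div, mul_left_comm, mul_div_cancel_left₀ _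
      denom_ne_zero]
    simp only [v, Nat.cast_add, Nat.cast_one]
  have abs_v_succ_le : ∀ᶠ n in atTop, |v (n + 1)| ≤ (1 - p n) * |v n| := by
    filter_upwards [tendsto_natCast_atTop_atTop.eventually_ge_atTop (α / 2)] with n hn
    have one_sub_p_nonneg : 0 ≤ 1 - p n := by
      rw [one_sub_p]
      exact div_nonneg (by linarith) (by positivity)
    rw [v_succ, abs_mul, abs_of_nonneg one_sub_p_nonneg]
  have abs_tendsto := tendsto_zero_of_eventually_succ_le_one_sub_mul (fun n ↦ abs_nonneg (v n))
    (tendsto_sum_range_div_natCast_add_atTop hα (by positivity)) abs_v_succ_le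
  exact (tendsto_zero_iff_abs_tendsto_zero _).2 abs_tendsto

theorem hasSum_fracWeight_natCast_add_one {α : ℝ} (hα : 0 < α) :
    HasSum (fun n : ℕ ↦ fracWeight α (n + 1)) (-(fracWeight α 0 / 2)) := by
  have telescope (n : ℕ) : α * fracWeight α (n + 1) =
      (n - α / 2) * fracWeight α n - ((n + 1 : ℕ) - α / 2) * fracWeight α (n + 1 : ℕ) :=
    mod_cast self_mul_fracWeight_add_one α n
  have summable := (summable_abs_fracWeight_natCast_add_one hα).of_abs.mul_left α
  simp only [telescope] at summable
  have hasSum := hasSum_sub_succ summable (tendsto_sub_mul_fracWeight_zero hα)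
  have initial : ((0 : ℕ) - α / 2) * fracWeight α (0 : ℕ) - 0 = α * -(fracWeight α 0 / 2) := by
    push_cast
    ring
  simp only [← telescope, initial] at hasSum
  exact (hasSum_mul_left_iff hα.ne').1 hasSum

theorem fracWeight_sum_zero_general (α : ℝ) (hα : 0 < α) :
    Summable (fun k : ℤ => |fracWeight α k|) ∧ (∑' k : ℤ, fracWeight α k) = 0 := by
  have pos := hasSum_fracWeight_natCast_add_one hα
  have neg : HasSum (fun n : ℕ ↦ fracWeight α (-(n + 1))) (-(fracWeight α 0 / 2)) := by
    simpa only [fracWeight_neg] using pos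
  have total : HasSum (fracWeight α) 0 := by
    convert pos.of_add_one_of_neg_add_one neg using 1
    ring
  exact ⟨total.summable.abs, total.tsum_eq⟩

/-- For every real `α` with `0 < α ≤ 2`, the fractional centered-difference
weights sum to zero: `Σ_{k ∈ ℤ} w_k^α = 0`, the series converging absolutely. -/
theorem fracWeight_sum_zero (α : ℝ) (hα0 : 0 < α) (hα2 : α ≤ 2) :
    Summable (fun k : ℤ => |fracWeight α k|) ∧ (∑' k : ℤ, fracWeight α k) = 0 :=
  fracWeight_sum_zero_general α hα0
end

section
/- Let α be real with 0 < α < 2. Then the fractional centered-difference weights satisfy w_0^α = Γ(α+1)/Γ(α/2+1)² > 0 and w_k^α < 0 for every nonzero integer k, where w_k^α = (−1)^k Γ(α+1) / (Γ(α/2 − k + 1) Γ(α/2 + k + 1)). -/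
open Real

/-! Reflecting the possibly negative Gamma factor, `1 / Γ(1 - s) = Γ(s) sin(πs) / π` at
`s = k - α/2`, makes the sign `(-1)^k` cancel against `sin(π(k - α/2)) = -(-1)^k sin(πα/2)`:
`w_k = -Γ(α+1) sin(πα/2) Γ(k - α/2) / (π Γ(k + α/2 + 1))`.
For `k ≥ 1` and `0 < α < 2` everything after the minus sign is positive, and `w` is even in `k`. -/

-- At a pole of `Γ(1 - s)` both sides are `0`, by the conventions `Γ = 0` there and `0⁻¹ = 0`.
theorem inv_Gamma_one_sub {s : ℝ} (hs : Gamma s ≠ 0) :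
    (Gamma (1 - s))⁻¹ = Gamma s * sin (π * s) / π := by
  have reflection : Gamma (1 - s) = π / sin (π * s) / Gamma s :=
    eq_div_of_mul_eq hs (by rw [mul_comm, Gamma_mul_Gamma_one_sub])
  rw [reflection, inv_div, div_div_eq_mul_div]

theorem fracWeight_zero (α : ℝ) :
    fracWeight α 0 = Gamma (α + 1) / Gamma (α / 2 + 1) ^ 2 := by
  simp [fracWeight, pow_two]

theorem fracWeight_zero_pos {α : ℝ} (hα : -1 < α) : 0 < fracWeight α 0 := by
  rw [fracWeight_zero]
  exact div_pos (Gamma_pos_of_pos (by linarith)) (pow_pos (Gamma_pos_of_pos (by linarith)) 2)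

theorem fracWeight_even (α : ℝ) : (fracWeight α).Even := by
  intro k
  have sign_even : (-1 : ℝ) ^ (-k) = (-1) ^ k := by rw [zpow_neg, ← inv_zpow, inv_neg_one]
  rw [fracWeight, fracWeight, sign_even, Int.cast_neg, sub_neg_eq_add, ← sub_eq_add_neg,
    mul_comm (Gamma (α / 2 + k + 1))]

theorem fracWeight_abs (α : ℝ) (k : ℤ) : fracWeight α |k| = fracWeight α k := by
  rcases abs_choice k with h | h
  · rw [h]
  · rw [h, fracWeight_even]

theorem fracWeight_eq_neg_sin_mul {α : ℝ} {k : ℤ} (h : Gamma (k - α / 2) ≠ 0) :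
    fracWeight α k = -(Gamma (α + 1) * sin (π * (α / 2)) * Gamma (k - α / 2) /
      (π * Gamma (k + α / 2 + 1))) := by
  have reflected : (Gamma (α / 2 - k + 1))⁻¹ =
      Gamma (k - α / 2) * sin (π * (k - α / 2)) / π := by
    rw [← inv_Gamma_one_sub h]
    ring_nf
  have sin_shift : sin (π * (k - α / 2)) = -((-1) ^ k * sin (π * (α / 2))) := by
    rw [← sin_int_mul_pi_sub]
    ring_nf
  have sign_sq : (-1 : ℝ) ^ k * (-1) ^ k = 1 := by rw [← mul_zpow]; simp
  calc fracWeight α k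
      = (-1) ^ k * Gamma (α + 1) * (Gamma (α / 2 - k + 1))⁻¹ / Gamma (k + α / 2 + 1) := by
        rw [fracWeight, add_comm (α / 2) (k : ℝ)]
        ring
    _ = -((-1) ^ k * (-1) ^ k * (Gamma (α + 1) * sin (π * (α / 2)) * Gamma (k - α / 2) /
          (π * Gamma (k + α / 2 + 1)))) := by
        rw [reflected, sin_shift]
        ring
    _ = _ := by rw [sign_sq, one_mul]

theorem fracWeight_neg_of_sin_pos {α : ℝ} {k : ℤ} (hα : -1 < α) (hk : α / 2 < k)
    (hsin : 0 < sin (π * (α / 2))) : fracWeight α k < 0 := by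
  have hsub : 0 < Gamma (k - α / 2) := Gamma_pos_of_pos (by linarith)
  have hadd : 0 < Gamma (k + α / 2 + 1) := Gamma_pos_of_pos (by linarith)
  have hnum : 0 < Gamma (α + 1) := Gamma_pos_of_pos (by linarith)
  rw [fracWeight_eq_neg_sin_mul hsub.ne']
  exact neg_neg_of_pos (by positivity)

/-- Let `α` be real with `0 < α < 2`. Then
`w_0^α = Γ(α+1)/Γ(α/2+1)² > 0` and `w_k^α < 0` for every nonzero integer `k`. -/
theorem fracWeight_signs (α : ℝ) (hα0 : 0 < α) (hα2 : α < 2) :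
    fracWeight α 0 = Real.Gamma (α + 1) / (Real.Gamma (α / 2 + 1)) ^ 2 ∧
    0 < fracWeight α 0 ∧
    ∀ k : ℤ, k ≠ 0 → fracWeight α k < 0 := by
  refine ⟨fracWeight_zero α, fracWeight_zero_pos (by linarith), fun k hk ↦ ?_⟩
  have one_le_abs : (1 : ℝ) ≤ (|k| : ℤ) := by exact_mod_cast Int.one_le_abs hk
  have hsin : 0 < sin (π * (α / 2)) :=
    sin_pos_of_pos_of_lt_pi (by positivity) (mul_lt_of_lt_one_right pi_pos (by linarith))
  rw [← fracWeight_abs]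
  exact fracWeight_neg_of_sin_pos (by linarith) (by linarith) hsin
end
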